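/- Let x > 0 be real. Then ∑_{n=1}^∞ σ_{1/2}(n) n^{−1/2} e^{−2π√(2nx)} sin(π/4 − 2π√(2nx)) = ( 2π√x + 1/(2√2·πx) )·ζ(−1/2) − ζ(1/2)/(2√2) + (x/(π√2)) ∑_{n=1}^∞ σ_{1/2}(n)/(x² + n²). -/

import Mathlib

open Complex Finset
open scoped Real BigOperators Classical

/-- Generalized divisor sum `σ_r(n) = ∑_{d ∣ n} d^r` with real exponent. -/
noncomputable def rsigma (r : ℝ) (n : ℕ) : ℝ := ∑ d ∈ n.divisors, (d : ℝ) ^ r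

/-!
Summing `∑_d d^{-s} e^{-2πxm/d}` over `m` in two ways proves the identity for large `Re s`, with a
complex exponent `s` in place of `1/2`. Poisson summation in `d` produces the Mellin transforms
`∫₀^∞ u^{-s} e^{-b/u - wu} du` (Bessel functions `K`) at `b = 2πxm` and the imaginary frequencies
`w = ±2πik`; summing the geometric series in `m` and expanding `coth` in partial fractions produces
`∑_{d,m} d^{1-s} / (x² + (dm)²)`. Integrating by parts twice continues the Bessel side to `Re s > 0`
with decay `k^{-2}`, so both double series stay holomorphic there and the identity persists. At
`s = 1/2` the Bessel function is elementary, `K_{1/2}(v) = √(π/2v) e^{-v}`, and the frequencies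
`±2πik` combine into the damped sine.
-/

open MeasureTheory Filter Topology Asymptotics

/-! ### The Bessel kernel and its Mellin transform -/

/-- The kernel `u ↦ e^{-b/u - wu}` whose Mellin transform is a Bessel function `K`. -/
noncomputable def besselKernel (b : ℝ) (w : ℂ) (u : ℝ) : ℂ := cexp (-(b / u) - w * u)

/-- `besselMellin b w z = ∫₀^∞ u^{z-1} e^{-b/u - wu} du`, which is `2 (b/w)^{z/2} K_z(2√(bw))` in
terms of the modified Bessel function. -/
noncomputable def besselMellin (b : ℝ) (w z : ℂ) : ℂ := mellin (besselKernel b w) z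

section Kernel

variable {b : ℝ} {w z : ℂ}

lemma norm_besselKernel (b : ℝ) (w : ℂ) (u : ℝ) :
    ‖besselKernel b w u‖ = Real.exp (-(b / u)) * Real.exp (-w.re * u) := by
  rw [besselKernel, norm_exp, ← Real.exp_add]
  congr 1
  rw [← ofReal_div]
  simp only [sub_re, neg_re, ofReal_re, mul_re, ofReal_im, mul_zero, sub_zero]
  ring

lemma continuousOn_besselKernel (b : ℝ) (w : ℂ) : ContinuousOn (besselKernel b w) (Set.Ioi 0) := by
  have hu : ∀ u ∈ Set.Ioi (0 : ℝ), (u : ℂ) ≠ 0 := fun u hu => ofReal_ne_zero.2 (ne_of_gt hu)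
  unfold besselKernel
  fun_prop (disch := assumption)

lemma hasDerivAt_besselKernel (b : ℝ) (w : ℂ) {u : ℝ} (hu : u ≠ 0) :
    HasDerivAt (besselKernel b w) ((b / (u : ℂ) ^ 2 - w) * besselKernel b w u) u := by
  have hu' : (u : ℂ) ≠ 0 := ofReal_ne_zero.2 hu
  have hexponent : HasDerivAt (fun v : ℂ => -(b / v) - w * v) (b / (u : ℂ) ^ 2 - w) u :=
    ((((hasDerivAt_inv hu').const_mul (b : ℂ)).neg).sub
      ((hasDerivAt_id (u : ℂ)).const_mul w)).congr_deriv (by ring)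
  exact hexponent.cexp.comp_ofReal.congr_deriv (mul_comm _ _)

lemma norm_besselKernel_le_one (hb : 0 ≤ b) (hw : 0 ≤ w.re) {u : ℝ} (hu : 0 ≤ u) :
    ‖besselKernel b w u‖ ≤ 1 := by
  rw [norm_besselKernel, ← Real.exp_add, Real.exp_le_one_iff]
  have : 0 ≤ b / u := by positivity
  nlinarith [mul_nonneg hw hu]

lemma besselKernel_isBigO_nhdsGT_zero (hb : 0 < b) (hw : 0 ≤ w.re) (a : ℝ) :
    besselKernel b w =O[𝓝[>] 0] (· ^ (-a)) := by
  have hdecay := ((isLittleO_exp_neg_mul_rpow_atTop hb a).isBigO).comp_tendsto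
    (tendsto_inv_nhdsGT_zero (𝕜 := ℝ))
  refine IsBigO.trans (.of_bound 1 ?_) (hdecay.trans_eventuallyEq ?_)
  · filter_upwards [self_mem_nhdsWithin] with u hu
    have hexp : Real.exp (-w.re * u) ≤ 1 :=
      Real.exp_le_one_iff.2 (by nlinarith [mul_nonneg hw (le_of_lt (Set.mem_Ioi.1 hu))])
    rw [norm_besselKernel, Function.comp_apply, Real.norm_eq_abs, Real.abs_exp, one_mul,
      div_eq_mul_inv, ← neg_mul]
    exact mul_le_of_le_one_right (Real.exp_pos _).le hexp
  · filter_upwards [self_mem_nhdsWithin] with u hu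
    rw [Function.comp_apply, Real.inv_rpow (le_of_lt hu), Real.rpow_neg (le_of_lt hu)]

lemma besselKernel_isBigO_atTop (hb : 0 ≤ b) (hw : 0 < w.re) (a : ℝ) :
    besselKernel b w =O[atTop] (· ^ (-a)) := by
  refine IsBigO.trans (.of_bound 1 ?_) (isLittleO_exp_neg_mul_rpow_atTop hw (-a)).isBigO
  filter_upwards [eventually_ge_atTop 0] with u hu
  have hexp : Real.exp (-(b / u)) ≤ 1 := Real.exp_le_one_iff.2 (neg_nonpos.2 (by positivity))
  rw [norm_besselKernel, Real.norm_eq_abs, Real.abs_exp, one_mul]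
  exact mul_le_of_le_one_left (Real.exp_pos _).le hexp

lemma exists_besselKernel_isBigO_atTop (hb : 0 ≤ b) (hw : 0 ≤ w.re) (hz : z.re < 0 ∨ 0 < w.re) :
    ∃ a : ℝ, z.re < a ∧ besselKernel b w =O[atTop] (· ^ (-a)) := by
  rcases hz with hz | hw'
  · refine ⟨0, hz, .of_bound 1 ?_⟩
    filter_upwards [eventually_ge_atTop 0] with u hu
    simpa using norm_besselKernel_le_one hb hw hu
  · exact ⟨z.re + 1, lt_add_one _, besselKernel_isBigO_atTop hb hw' _⟩

lemma mellinConvergent_besselKernel (hb : 0 < b) (hw : 0 ≤ w.re) (hz : z.re < 0 ∨ 0 < w.re) :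
    MellinConvergent (besselKernel b w) z := by
  obtain ⟨a, hza, hO⟩ := exists_besselKernel_isBigO_atTop hb.le hw hz
  exact mellinConvergent_of_isBigO_rpow
    ((continuousOn_besselKernel b w).locallyIntegrableOn measurableSet_Ioi) hO hza
    (besselKernel_isBigO_nhdsGT_zero hb hw (z.re - 1)) (sub_one_lt _)

lemma differentiableAt_besselMellin (hb : 0 < b) (hw : 0 ≤ w.re) (hz : z.re < 0 ∨ 0 < w.re) :
    DifferentiableAt ℂ (besselMellin b w) z := by
  obtain ⟨a, hza, hO⟩ := exists_besselKernel_isBigO_atTop hb.le hw hz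
  exact mellin_differentiableAt_of_isBigO_rpow
    ((continuousOn_besselKernel b w).locallyIntegrableOn measurableSet_Ioi) hO hza
    (besselKernel_isBigO_nhdsGT_zero hb hw (z.re - 1)) (sub_one_lt _)

lemma besselMellin_zero (hb : 0 < b) (hz : z.re < 0) :
    besselMellin b 0 z = (b : ℂ) ^ z * Gamma (-z) := by
  have hinv : besselKernel b 0 = fun u : ℝ => (fun v : ℝ => cexp (-(b * v : ℝ))) u⁻¹ := by
    funext u
    simp [besselKernel, div_eq_mul_inv]
  rw [besselMellin, hinv, mellin_comp_inv (fun v : ℝ => cexp (-(b * v : ℝ))),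
    mellin_comp_mul_left (fun v : ℝ => cexp (-(v : ℝ))) _ hb, neg_neg, smul_eq_mul,
    Gamma_eq_integral (by simpa using hz), GammaIntegral_eq_mellin]
  simp

end Kernel

section Recurrence

variable {b : ℝ} {w z : ℂ}

lemma isBigO_ofReal_cpow_rpow {l : Filter ℝ} (hl : ∀ᶠ u in l, 0 < u) (z : ℂ) :
    (fun u : ℝ => (u : ℂ) ^ z) =O[l] (· ^ z.re) := by
  refine .of_bound 1 ?_
  filter_upwards [hl] with u hu
  rw [norm_cpow_eq_rpow_re_of_pos hu, Real.norm_of_nonneg (Real.rpow_nonneg hu.le _), one_mul]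

lemma cpow_mul_besselKernel_isBigO {l : Filter ℝ} (hl : ∀ᶠ u in l, 0 < u) {a : ℝ}
    (ha : besselKernel b w =O[l] (· ^ (-a))) (z : ℂ) :
    (fun u : ℝ => (u : ℂ) ^ z * besselKernel b w u) =O[l] (· ^ (z.re - a)) := by
  refine ((isBigO_ofReal_cpow_rpow hl z).mul ha).trans_eventuallyEq ?_
  filter_upwards [hl] with u hu
  rw [← Real.rpow_add hu, sub_eq_add_neg]

lemma tendsto_cpow_mul_besselKernel_nhdsGT_zero (hb : 0 < b) (hw : 0 ≤ w.re) (z : ℂ) :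
    Tendsto (fun u : ℝ => (u : ℂ) ^ z * besselKernel b w u) (𝓝[>] 0) (𝓝 0) := by
  have hO := cpow_mul_besselKernel_isBigO self_mem_nhdsWithin
    (besselKernel_isBigO_nhdsGT_zero hb hw (z.re - 1)) z
  simp only [sub_sub_cancel, Real.rpow_one] at hO
  exact hO.trans_tendsto (tendsto_nhdsWithin_of_tendsto_nhds tendsto_id)

lemma tendsto_cpow_mul_besselKernel_atTop (hb : 0 ≤ b) (hw : 0 ≤ w.re)
    (hz : z.re < 0 ∨ 0 < w.re) :
    Tendsto (fun u : ℝ => (u : ℂ) ^ z * besselKernel b w u) atTop (𝓝 0) := by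
  obtain ⟨a, hza, hO⟩ := exists_besselKernel_isBigO_atTop hb hw hz
  refine (cpow_mul_besselKernel_isBigO (eventually_gt_atTop 0) hO z).trans_tendsto ?_
  simpa only [neg_sub] using tendsto_rpow_neg_atTop (sub_pos.2 hza)

lemma deriv_cpow_mul_besselKernel_eq (b : ℝ) (w z : ℂ) {u : ℝ} (hu : 0 < u) :
    z * (u : ℂ) ^ (z - 1) * besselKernel b w u +
        (u : ℂ) ^ z * ((b / (u : ℂ) ^ 2 - w) * besselKernel b w u) =
      z * ((u : ℂ) ^ (z - 1) * besselKernel b w u) +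
        b * ((u : ℂ) ^ (z - 1 - 1) * besselKernel b w u) -
        w * ((u : ℂ) ^ (z + 1 - 1) * besselKernel b w u) := by
  have hu' : (u : ℂ) ≠ 0 := ofReal_ne_zero.2 hu.ne'
  have hpow : (u : ℂ) ^ (z - 1 - 1) = (u : ℂ) ^ z / (u : ℂ) ^ 2 := by
    rw [← cpow_ofNat, ← cpow_sub _ _ hu']
    ring_nf
  simp only [hpow, add_sub_cancel_right]
  ring

lemma besselMellin_recurrence (hb : 0 < b) (hw : 0 ≤ w.re) (hz : z.re < -1 ∨ 0 < w.re) :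
    w * besselMellin b w (z + 1) = z * besselMellin b w z + b * besselMellin b w (z - 1) := by
  have hconv (c : ℂ) (hc : c.re ≤ z.re + 1) : IntegrableOn
      (fun u : ℝ => (u : ℂ) ^ (c - 1) * besselKernel b w u) (Set.Ioi 0) :=
    mellinConvergent_besselKernel hb hw (hz.imp_left fun h => by linarith)
  have hint₀ := (hconv z (by simp)).const_mul z
  have hint₁ := (hconv (z - 1) (by simp; linarith)).const_mul (b : ℂ)
  have hint₂ := (hconv (z + 1) (by simp)).const_mul w
  have hint₀₁ : IntegrableOn (fun u : ℝ => z * ((u : ℂ) ^ (z - 1) * besselKernel b w u) +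
      b * ((u : ℂ) ^ (z - 1 - 1) * besselKernel b w u)) (Set.Ioi 0) := hint₀.add hint₁
  have hderiv := fun u (hu : u ∈ Set.Ioi (0 : ℝ)) => deriv_cpow_mul_besselKernel_eq b w z hu
  have hparts := integral_Ioi_deriv_mul_eq_sub
    (fun u hu => (hasStrictDerivAt_cpow_const (c := z)
      (ofReal_mem_slitPlane.2 hu)).hasDerivAt.comp_ofReal)
    (fun u hu => hasDerivAt_besselKernel b w (ne_of_gt hu))
    (IntegrableOn.congr_fun (hint₀₁.sub hint₂) (fun u hu => (hderiv u hu).symm) measurableSet_Ioi)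
    (tendsto_cpow_mul_besselKernel_nhdsGT_zero hb hw z)
    (tendsto_cpow_mul_besselKernel_atTop hb.le hw (hz.imp_left fun h => by linarith))
  rw [setIntegral_congr_fun measurableSet_Ioi hderiv, integral_sub hint₀₁ hint₂,
    integral_add hint₀ hint₁] at hparts
  simp only [integral_const_mul, sub_self] at hparts
  exact (sub_eq_zero.1 hparts).symm

lemma integral_rpow_mul_exp_neg_div (hb : 0 < b) {σ : ℝ} (hσ : σ < 0) :
    ∫ u in Set.Ioi (0 : ℝ), u ^ (σ - 1) * Real.exp (-(b / u)) = b ^ σ * Real.Gamma (-σ) := by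
  have hzero := besselMellin_zero (z := σ) hb hσ
  rw [besselMellin, mellin, ← ofReal_cpow hb.le, ← ofReal_neg, Gamma_ofReal, ← ofReal_mul] at hzero
  rw [← ofReal_inj, ← hzero, ← integral_complex_ofReal]
  refine setIntegral_congr_fun measurableSet_Ioi fun u hu => ?_
  simp [besselKernel, ofReal_cpow (le_of_lt hu)]

lemma norm_besselMellin_le (hb : 0 < b) (hw : 0 ≤ w.re) (hz : z.re < 0) :
    ‖besselMellin b w z‖ ≤ b ^ z.re * Real.Gamma (-z.re) := by
  have hbound : ∀ u ∈ Set.Ioi (0 : ℝ), ‖(u : ℂ) ^ (z - 1) • besselKernel b w u‖ ≤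
      u ^ (z.re - 1) * Real.exp (-(b / u)) := fun u hu => by
    have hexp : Real.exp (-w.re * u) ≤ 1 :=
      Real.exp_le_one_iff.2 (by nlinarith [mul_nonneg hw (le_of_lt (Set.mem_Ioi.1 hu))])
    rw [norm_smul, norm_cpow_eq_rpow_re_of_pos hu, norm_besselKernel, sub_re, one_re]
    exact mul_le_mul_of_nonneg_left (mul_le_of_le_one_right (Real.exp_pos _).le hexp)
      (Real.rpow_nonneg (le_of_lt hu) _)
  rw [← integral_rpow_mul_exp_neg_div hb hz, besselMellin, mellin]
  have hint : IntegrableOn (fun u : ℝ => u ^ (z.re - 1) * Real.exp (-(b / u))) (Set.Ioi 0) :=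
    .of_integral_ne_zero (by
      rw [integral_rpow_mul_exp_neg_div hb hz]
      have := Real.Gamma_pos_of_pos (neg_pos.2 hz)
      positivity)
  exact norm_integral_le_of_norm_le hint
    ((ae_restrict_iff' measurableSet_Ioi).2 (.of_forall hbound))

end Recurrence

section Continuation

variable {b : ℝ} {w z : ℂ}

/-- The analytic continuation in `z` of `besselMellin b w z` to `Re z < 1` for `w ≠ 0` on the line
`Re w = 0`, where the integral converges absolutely only for `Re z < 0`. -/
noncomputable def besselMellinExt (b : ℝ) (w z : ℂ) : ℂ :=
  ((z - 1) * besselMellin b w (z - 1) + b * besselMellin b w (z - 2)) / w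

lemma besselMellinExt_eq_besselMellin (hb : 0 < b) (hw : 0 ≤ w.re) (hw₀ : w ≠ 0)
    (hz : z.re < 0 ∨ 0 < w.re) : besselMellinExt b w z = besselMellin b w z := by
  have hrec := besselMellin_recurrence (z := z - 1) hb hw
    (hz.imp_left fun h => by rw [sub_re, one_re]; linarith)
  rw [sub_add_cancel, sub_sub, one_add_one_eq_two] at hrec
  rw [besselMellinExt, ← hrec, mul_div_cancel_left₀ _ hw₀]

lemma differentiableAt_besselMellinExt (hb : 0 < b) (hw : 0 ≤ w.re) (hz : z.re < 1) :
    DifferentiableAt ℂ (besselMellinExt b w) z := by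
  have hdiff (c : ℂ) (hc : 1 ≤ c.re) :
      DifferentiableAt ℂ (fun z => besselMellin b w (z - c)) z :=
    (differentiableAt_besselMellin hb hw (.inl (by rw [sub_re]; linarith))).comp z
      (differentiableAt_id.sub_const c)
  exact (((differentiableAt_id.sub_const 1).mul (hdiff 1 (by simp))).add
    ((hdiff 2 (by simp)).const_mul (b : ℂ))).div_const w

lemma sq_mul_besselMellinExt (hb : 0 < b) (hw : 0 ≤ w.re) (hw₀ : w ≠ 0) (hz : z.re < 1) :
    w ^ 2 * besselMellinExt b w z = (z - 1) * (z - 2) * besselMellin b w (z - 2) +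
      2 * (z - 2) * (b * besselMellin b w (z - 3)) + b ^ 2 * besselMellin b w (z - 4) := by
  have hrec₁ := besselMellin_recurrence (z := z - 2) hb hw (.inl (by simp; linarith))
  have hrec₂ := besselMellin_recurrence (z := z - 3) hb hw (.inl (by simp; linarith))
  rw [show z - 2 + 1 = z - 1 by ring, show z - 2 - 1 = z - 3 by ring] at hrec₁
  rw [show z - 3 + 1 = z - 2 by ring, show z - 3 - 1 = z - 4 by ring] at hrec₂
  rw [besselMellinExt, sq, mul_assoc, mul_div_cancel₀ _ hw₀]
  linear_combination (z - 1) * hrec₁ + (b : ℂ) * hrec₂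

/-- The constant in the decay estimate `norm_besselMellinExt_le`. -/
noncomputable def besselMellinExtBound (z : ℂ) : ℝ :=
  ‖z - 1‖ * ‖z - 2‖ * Real.Gamma (2 - z.re) + 2 * ‖z - 2‖ * Real.Gamma (3 - z.re) +
    Real.Gamma (4 - z.re)

lemma norm_pow_mul_besselMellin_sub_le (hb : 0 < b) (hw : 0 ≤ w.re) (hz : z.re < 1) (n : ℕ) :
    ‖(b : ℂ) ^ n * besselMellin b w (z - (n + 2 : ℕ))‖ ≤
      b ^ (z.re - 2) * Real.Gamma (n + 2 - z.re) := by
  have hre : (z - (n + 2 : ℕ)).re = z.re - 2 - n := by simp; ring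
  have hle := norm_besselMellin_le (z := z - (n + 2 : ℕ)) hb hw
    (by linarith [n.cast_nonneg (α := ℝ)])
  rw [hre, Real.rpow_sub_natCast hb.ne'] at hle
  rw [norm_mul, norm_pow, norm_real, Real.norm_of_nonneg hb.le]
  calc b ^ n * ‖besselMellin b w (z - (n + 2 : ℕ))‖
      ≤ b ^ n * (b ^ (z.re - 2) / b ^ n * Real.Gamma (-(z.re - 2 - n))) := by gcongr
    _ = b ^ (z.re - 2) * Real.Gamma (n + 2 - z.re) := by
      rw [← mul_assoc, mul_div_cancel₀ _ (by positivity)]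
      ring_nf

lemma norm_besselMellinExt_le (hb : 0 < b) (hw : 0 ≤ w.re) (hw₀ : w ≠ 0) (hz : z.re < 1) :
    ‖besselMellinExt b w z‖ ≤ besselMellinExtBound z * b ^ (z.re - 2) / ‖w‖ ^ 2 := by
  have hle := norm_pow_mul_besselMellin_sub_le hb hw hz
  have hle₀ := hle 0
  have hle₁ := hle 1
  have hle₂ := hle 2
  norm_num [abs_of_pos hb] at hle₀ hle₁ hle₂
  rw [le_div_iff₀' (by positivity), ← norm_pow, ← norm_mul, sq_mul_besselMellinExt hb hw hw₀ hz]
  calc _ ≤ ‖z - 1‖ * ‖z - 2‖ * ‖besselMellin b w (z - 2)‖ +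
        2 * ‖z - 2‖ * (b * ‖besselMellin b w (z - 3)‖) + b ^ 2 * ‖besselMellin b w (z - 4)‖ := by
        refine (norm_add₃_le ..).trans_eq ?_
        simp [abs_of_pos hb]
    _ ≤ ‖z - 1‖ * ‖z - 2‖ * (b ^ (z.re - 2) * Real.Gamma (2 - z.re)) +
        2 * ‖z - 2‖ * (b ^ (z.re - 2) * Real.Gamma (3 - z.re)) +
        b ^ (z.re - 2) * Real.Gamma (4 - z.re) := by gcongr
    _ = besselMellinExtBound z * b ^ (z.re - 2) := by
      rw [besselMellinExtBound]
      ring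

end Continuation

/-! ### Evaluation at `z = 1/2` -/

section ClosedForm

variable {b : ℝ} {w z : ℂ}

lemma hasDerivAt_besselMellin_left (hb : 0 < b) (hw : 0 ≤ w.re) (hz : z.re < 0 ∨ 0 < w.re) :
    HasDerivAt (fun b => besselMellin b w z) (-besselMellin b w (z - 1)) b := by
  have hconv {c : ℝ} (hc : 0 < c) (ζ : ℂ) (hζ : ζ.re ≤ z.re) : IntegrableOn
      (fun u : ℝ => (u : ℂ) ^ (ζ - 1) * besselKernel c w u) (Set.Ioi 0) :=
    mellinConvergent_besselKernel hc hw (hz.imp_left hζ.trans_lt)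
  have hderiv : ∀ u ∈ Set.Ioi (0 : ℝ), ∀ c : ℝ,
      HasDerivAt (fun c : ℝ => (u : ℂ) ^ (z - 1) * besselKernel c w u)
        (-((u : ℂ) ^ (z - 1 - 1) * besselKernel c w u)) c := by
    intro u hu c
    have hu' : (u : ℂ) ≠ 0 := ofReal_ne_zero.2 (ne_of_gt hu)
    have hexponent : HasDerivAt (fun c : ℂ => -(c / u) - w * u) (-(1 / (u : ℂ))) c :=
      (((hasDerivAt_id (c : ℂ)).div_const (u : ℂ)).neg).sub_const (w * u)
    refine (hexponent.cexp.comp_ofReal.const_mul ((u : ℂ) ^ (z - 1))).congr_deriv ?_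
    rw [cpow_sub (z - 1) 1 hu', cpow_one, besselKernel]
    ring
  have hbound : ∀ u ∈ Set.Ioi (0 : ℝ), ∀ c ∈ Set.Ioi (b / 2),
      ‖-((u : ℂ) ^ (z - 1 - 1) * besselKernel c w u)‖ ≤
        ‖(u : ℂ) ^ (z - 1 - 1) * besselKernel (b / 2) w u‖ := by
    intro u hu c hc
    have : b / 2 / u ≤ c / u := div_le_div_of_nonneg_right (le_of_lt hc) (le_of_lt hu)
    rw [norm_neg, norm_mul, norm_mul, norm_besselKernel, norm_besselKernel]
    gcongr
  have h := (hasDerivAt_integral_of_dominated_loc_of_deriv_le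
    (Ioi_mem_nhds (half_lt_self hb))
    (eventually_of_mem (Ioi_mem_nhds hb) fun c hc => (hconv hc z le_rfl).aestronglyMeasurable)
    (hconv hb z le_rfl)
    (hconv hb (z - 1) (by simp)).aestronglyMeasurable.neg
    ((ae_restrict_iff' measurableSet_Ioi).2 (.of_forall hbound))
    (hconv (half_pos hb) (z - 1) (by simp)).norm
    ((ae_restrict_iff' measurableSet_Ioi).2
      (.of_forall fun u hu c _ => hderiv u hu c))).2
  rwa [integral_neg] at h

lemma mellinConvergent_besselKernel_zero_left (hw : 0 < w.re) (hz : 0 < z.re) :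
    MellinConvergent (besselKernel 0 w) z := by
  refine mellinConvergent_of_isBigO_rpow (b := 0)
    ((continuousOn_besselKernel 0 w).locallyIntegrableOn measurableSet_Ioi)
    (besselKernel_isBigO_atTop le_rfl hw _) (lt_add_one _) (.of_bound 1 ?_) hz
  filter_upwards [self_mem_nhdsWithin] with u hu
  simpa using norm_besselKernel_le_one le_rfl hw.le (le_of_lt hu)

lemma tendsto_besselMellin_nhdsGT_zero (hw : 0 < w.re) (hz : 0 < z.re) :
    Tendsto (fun b => besselMellin b w z) (𝓝[>] 0) (𝓝 (besselMellin 0 w z)) := by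
  refine tendsto_integral_filter_of_dominated_convergence _ ?_ ?_
    (mellinConvergent_besselKernel_zero_left hw hz).norm ?_
  · filter_upwards [self_mem_nhdsWithin] with b hb
    exact (mellinConvergent_besselKernel hb hw.le (.inr hw)).aestronglyMeasurable
  · filter_upwards [self_mem_nhdsWithin] with b hb
    refine (ae_restrict_iff' measurableSet_Ioi).2 (.of_forall fun u hu => ?_)
    have : 0 / u ≤ b / u := div_le_div_of_nonneg_right (le_of_lt hb) (le_of_lt hu)
    rw [norm_smul, norm_smul, norm_besselKernel, norm_besselKernel]
    gcongr
  · refine .of_forall fun u => (Continuous.tendsto ?_ 0).mono_left nhdsWithin_le_nhds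
    unfold besselKernel
    fun_prop

lemma besselMellin_zero_left_one_half (hw : 0 < w.re) :
    besselMellin 0 w (1 / 2) = (π / w) ^ (2⁻¹ : ℂ) := by
  have hsubst := mellin_comp_rpow (besselKernel 0 w) 1 2
  have hgauss : mellin (fun t : ℝ => besselKernel 0 w (t ^ (2 : ℝ))) 1 =
      (π / w) ^ (2⁻¹ : ℂ) / 2 := by
    rw [← one_div, ← integral_gaussian_complex_Ioi hw, mellin]
    simp [besselKernel]
  rw [hgauss] at hsubst
  rw [besselMellin]
  simp only [abs_two, ofReal_ofNat, real_smul, ofReal_inv] at hsubst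
  linear_combination -2 * hsubst

end ClosedForm

section OneHalf

variable {b : ℝ} {w : ℂ}

lemma exists_eq_const_mul_cexp_of_hasDerivAt {f : ℝ → ℂ} {c : ℂ}
    (hf : ∀ t : ℝ, 0 < t → HasDerivAt f (c * f t) t) :
    ∃ C : ℂ, ∀ t : ℝ, 0 < t → f t = C * cexp (c * t) := by
  have hderiv (t : ℝ) (ht : 0 < t) : HasDerivAt (fun t : ℝ => f t * cexp (-c * t)) 0 t := by
    have hexp : HasDerivAt (fun t : ℝ => cexp (-c * t)) (cexp (-c * t) * (-c * 1)) t :=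
      ((hasDerivAt_id (t : ℂ)).const_mul (-c)).cexp.comp_ofReal
    exact ((hf t ht).mul hexp).congr_deriv (by ring)
  refine ⟨f 1 * cexp (-c * (1 : ℝ)), fun t ht => ?_⟩
  have hconst : f t * cexp (-c * t) = f 1 * cexp (-c * (1 : ℝ)) :=
    isOpen_Ioi.is_const_of_deriv_eq_zero isPreconnected_Ioi
      (fun t ht => (hderiv t ht).differentiableAt.differentiableWithinAt)
      (fun t ht => (hderiv t ht).deriv) ht (Set.mem_Ioi.2 one_pos)
  rw [← hconst, mul_assoc, ← Complex.exp_add]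
  simp

lemma re_cpow_two_inv_pos (hw : 0 < w.re) : 0 < (w ^ (2⁻¹ : ℂ)).re := by
  rw [cpow_inv_two_re]
  positivity

lemma hasDerivAt_besselMellin_sq (hw : 0 < w.re) {t : ℝ} (ht : 0 < t) (z : ℂ) :
    HasDerivAt (fun t : ℝ => besselMellin (t ^ 2) w z)
      (-2 * (t * besselMellin (t ^ 2) w (z - 1))) t := by
  refine (HasDerivAt.scomp t (h := fun t : ℝ => t ^ 2)
    (hasDerivAt_besselMellin_left (pow_pos ht 2) hw.le (.inr hw))
    (hasDerivAt_pow 2 t)).congr_deriv ?_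
  simp only [Nat.cast_ofNat, Nat.add_one_sub_one, pow_one, real_smul, ofReal_mul, ofReal_ofNat]
  ring

lemma hasDerivAt_mul_besselMellin_sq (hw : 0 < w.re) {t : ℝ} (ht : 0 < t) :
    HasDerivAt (fun t : ℝ => t * besselMellin (t ^ 2) w (-1 / 2))
      (-2 * (w * besselMellin (t ^ 2) w (1 / 2))) t := by
  have hrec := besselMellin_recurrence (z := -1 / 2) (pow_pos ht 2) hw.le (.inr hw)
  refine ((hasDerivAt_id (t : ℂ)).comp_ofReal.mul
    (hasDerivAt_besselMellin_sq hw ht (-1 / 2))).congr_deriv ?_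
  norm_num at hrec ⊢
  linear_combination 2 * hrec

lemma mul_besselMellin_sq_isBigO_one (hw : 0 < w.re) :
    (fun t : ℝ => t * besselMellin (t ^ 2) w (-1 / 2)) =O[atTop] (fun _ => (1 : ℝ)) := by
  refine .of_bound (Real.Gamma (1 / 2)) ?_
  filter_upwards [eventually_gt_atTop 0] with t ht
  have hle := norm_besselMellin_le (z := -1 / 2) (pow_pos ht 2) hw.le (by norm_num)
  have hpow : (t ^ 2) ^ (-1 / 2 : ℂ).re = t⁻¹ := by
    rw [← Real.rpow_natCast, ← Real.rpow_mul ht.le, ← Real.rpow_neg_one]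
    norm_num
  rw [hpow, show -(-1 / 2 : ℂ).re = 1 / 2 by norm_num] at hle
  rw [norm_mul, norm_real, Real.norm_of_nonneg ht.le, norm_one, mul_one]
  calc t * ‖besselMellin (t ^ 2) w (-1 / 2)‖ ≤ t * (t⁻¹ * Real.Gamma (1 / 2)) := by gcongr
    _ = Real.Gamma (1 / 2) := by field_simp

lemma besselMellin_sq_isBigO_one (hw : 0 < w.re) :
    (fun t : ℝ => besselMellin (t ^ 2) w (1 / 2)) =O[atTop] (fun _ => (1 : ℝ)) := by
  have hw₀ : w ≠ 0 := fun h => by simp [h] at hw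
  refine .of_bound (|besselMellinExtBound (1 / 2)| / ‖w‖ ^ 2) ?_
  filter_upwards [eventually_ge_atTop 1] with t ht
  have ht₀ : 0 < t ^ 2 := by positivity
  have hpow : (t ^ 2) ^ ((1 / 2 : ℂ).re - 2) ≤ 1 :=
    Real.rpow_le_one_of_one_le_of_nonpos (one_le_pow₀ ht) (by norm_num)
  rw [norm_one, mul_one, ← besselMellinExt_eq_besselMellin ht₀ hw.le hw₀ (.inr hw)]
  refine (norm_besselMellinExt_le ht₀ hw.le hw₀ (by norm_num)).trans ?_
  gcongr
  exact (mul_le_mul (le_abs_self _) hpow (by positivity) (abs_nonneg _)).trans_eq (mul_one _)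

lemma sqrt_mul_besselMellin_neg_one_half (hb : 0 < b) (hw : 0 < w.re) :
    Real.sqrt b * besselMellin b w (-1 / 2) = w ^ (2⁻¹ : ℂ) * besselMellin b w (1 / 2) := by
  set r := w ^ (2⁻¹ : ℂ)
  have hrsq : r ^ 2 = w := cpow_ofNat_inv_pow w 2
  obtain ⟨C, hC⟩ := exists_eq_const_mul_cexp_of_hasDerivAt (c := 2 * r) (f := fun t =>
    t * besselMellin (t ^ 2) w (-1 / 2) - r * besselMellin (t ^ 2) w (1 / 2)) fun t ht => by
      refine ((hasDerivAt_mul_besselMellin_sq hw ht).sub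
        ((hasDerivAt_besselMellin_sq hw ht (1 / 2)).const_mul r)).congr_deriv ?_
      norm_num
      linear_combination (2 * besselMellin (t ^ 2) w (1 / 2)) * hrsq
  have hexp : Tendsto (fun t : ℝ => cexp (-(2 * r * t))) atTop (𝓝 0) := by
    refine tendsto_exp_comap_re_atBot.comp (tendsto_comap_iff.2 ?_)
    have hre : 0 < (2 * r).re := by simpa using re_cpow_two_inv_pos hw
    simpa [Function.comp_def] using tendsto_id.const_mul_atTop hre
  -- The solution `C e^{2rt}` would grow exponentially, while both Mellin transforms stay bounded.
  have hC₀ : C = 0 := by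
    have hbdd := (mul_besselMellin_sq_isBigO_one hw).sub
      ((besselMellin_sq_isBigO_one hw).const_mul_left r)
    have hlim := (hbdd.mul_isLittleO ((isLittleO_one_iff ℝ).2 hexp)).congr' (f₂ := fun _ => C)
      (g₂ := fun _ => (1 : ℝ)) (by
        filter_upwards [eventually_gt_atTop 0] with t ht
        rw [hC t ht, mul_assoc, ← Complex.exp_add, add_neg_cancel, Complex.exp_zero, mul_one])
      (.of_forall fun _ => mul_one _)
    exact tendsto_const_nhds_iff.1 ((isLittleO_one_iff ℝ).1 hlim)
  have h := hC (Real.sqrt b) (Real.sqrt_pos.2 hb)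
  rwa [Real.sq_sqrt hb.le, hC₀, zero_mul, sub_eq_zero] at h

lemma besselMellin_one_half (hb : 0 < b) (hw : 0 < w.re) :
    besselMellin b w (1 / 2) =
      (π / w) ^ (2⁻¹ : ℂ) * cexp (-2 * w ^ (2⁻¹ : ℂ) * Real.sqrt b) := by
  obtain ⟨C, hC⟩ := exists_eq_const_mul_cexp_of_hasDerivAt (c := -2 * w ^ (2⁻¹ : ℂ))
    (f := fun t => besselMellin (t ^ 2) w (1 / 2)) fun t ht => by
      have h := sqrt_mul_besselMellin_neg_one_half (pow_pos ht 2) hw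
      rw [Real.sqrt_sq ht.le] at h
      refine (hasDerivAt_besselMellin_sq hw ht (1 / 2)).congr_deriv ?_
      rw [show (1 / 2 - 1 : ℂ) = -1 / 2 by norm_num]
      linear_combination (-2 : ℂ) * h
  have hzero : Tendsto (fun t : ℝ => besselMellin (t ^ 2) w (1 / 2)) (𝓝[>] (0 : ℝ))
      (𝓝 (besselMellin 0 w (1 / 2))) := by
    refine (tendsto_besselMellin_nhdsGT_zero hw (by norm_num)).comp ?_
    refine tendsto_nhdsWithin_iff.2 ⟨(Continuous.tendsto' (by fun_prop) _ _ (by simp)).mono_left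
      nhdsWithin_le_nhds, ?_⟩
    filter_upwards [self_mem_nhdsWithin] with t ht using pow_pos (Set.mem_Ioi.1 ht) 2
  have hexp : Tendsto (fun t : ℝ => C * cexp (-2 * w ^ (2⁻¹ : ℂ) * t)) (𝓝[>] (0 : ℝ)) (𝓝 C) :=
    (Continuous.tendsto' (by fun_prop) _ _ (by simp)).mono_left nhdsWithin_le_nhds
  have hC₀ : besselMellin 0 w (1 / 2) = C :=
    tendsto_nhds_unique (l := 𝓝[>] (0 : ℝ))
      (hzero.congr' (eventually_of_mem self_mem_nhdsWithin hC)) hexp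
  have h := hC (Real.sqrt b) (Real.sqrt_pos.2 hb)
  rwa [Real.sq_sqrt hb.le, ← hC₀, besselMellin_zero_left_one_half hw] at h

lemma continuousOn_besselMellin (hb : 0 < b) {z : ℂ} (hz : z.re < 0) :
    ContinuousOn (fun w => besselMellin b w z) {w | 0 ≤ w.re} := by
  refine continuousOn_of_dominated (fun w hw =>
      (mellinConvergent_besselKernel hb hw (.inl hz)).aestronglyMeasurable)
    (fun w hw => (ae_restrict_iff' measurableSet_Ioi).2 (.of_forall fun u hu => ?_))
    (mellinConvergent_besselKernel (w := 0) hb le_rfl (.inl hz)).norm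
    (.of_forall fun u => Continuous.continuousOn ?_)
  · rw [norm_smul, norm_smul, norm_besselKernel, norm_besselKernel]
    have hu' : -w.re * u ≤ -(0 : ℂ).re * u := by
      simpa using mul_nonneg hw (le_of_lt hu)
    gcongr
  · unfold besselKernel
    fun_prop

theorem besselMellinExt_one_half (hb : 0 < b) (hw : 0 ≤ w.re) (hw₀ : w ≠ 0) :
    besselMellinExt b w (1 / 2) =
      (π / w) ^ (2⁻¹ : ℂ) * cexp (-2 * w ^ (2⁻¹ : ℂ) * Real.sqrt b) := by
  set H : Set ℂ := {w | 0 ≤ w.re ∧ w ≠ 0}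
  have hopen : Set.EqOn (fun w => besselMellinExt b w (1 / 2))
      (fun w => (π / w) ^ (2⁻¹ : ℂ) * cexp (-2 * w ^ (2⁻¹ : ℂ) * Real.sqrt b))
      {w | 0 < w.re} := fun w (hw : 0 < w.re) => by
    have hw₀ : w ≠ 0 := fun h => by simp [h] at hw
    exact (besselMellinExt_eq_besselMellin hb hw.le hw₀ (.inr hw)).trans
      (besselMellin_one_half hb hw)
  have hslit : ∀ w ∈ H, w ∈ slitPlane := fun w hw => mem_slitPlane_iff_arg.2
    ⟨fun h => by linarith [abs_arg_le_pi_div_two_iff.2 hw.1, le_abs_self w.arg, Real.pi_pos], hw.2⟩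
  have hdiv : ∀ w ∈ H, (π : ℂ) / w ∈ H := fun w hw =>
    ⟨by simpa [div_re] using div_nonneg (mul_nonneg Real.pi_pos.le hw.1) (normSq_nonneg w),
      div_ne_zero (ofReal_ne_zero.2 Real.pi_ne_zero) hw.2⟩
  have hne : ∀ w ∈ H, w ≠ 0 := fun w hw => hw.2
  have hcont (z : ℂ) (hz : z.re < 0) : ContinuousOn (fun w => besselMellin b w z) H :=
    (continuousOn_besselMellin hb hz).mono fun w hw => hw.1
  have hcont₁ := hcont (1 / 2 - 1) (by norm_num)
  have hcont₂ := hcont (1 / 2 - 2) (by norm_num)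
  refine hopen.of_subset_closure (t := H) ?_ ?_ (fun w hw => ⟨le_of_lt hw, ?_⟩) ?_ ⟨hw, hw₀⟩
  · unfold besselMellinExt
    fun_prop (disch := assumption)
  · exact ((continuousOn_const.div continuousOn_id hne).cpow_const
      fun w hw => hslit _ (hdiv w hw)).mul
      (((continuousOn_id.cpow_const hslit).const_mul _).mul_const _).cexp
  · rintro rfl
    simp at hw
  · rw [closure_setOfPred_lt_re]
    exact fun w hw => hw.1

end OneHalf

/-- The sum of the values of `besselMellinExt b · z` at the conjugate frequencies `±2πik`, that is
`2 ∫₀^∞ u^{z-1} e^{-b/u} cos (2πku) du` continued from `Re z < 0` to `Re z < 1`. -/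
noncomputable def besselPair (b k : ℝ) (z : ℂ) : ℂ :=
  besselMellinExt b (2 * π * k * I) z + besselMellinExt b (-(2 * π * k * I)) z

section Pair

variable {b k : ℝ} {z : ℂ}

lemma two_pi_mul_mul_I_ne_zero (hk : k ≠ 0) : 2 * π * k * I ≠ 0 := by
  simp [hk, Real.pi_ne_zero]

lemma re_two_pi_mul_mul_I (k : ℝ) : (2 * π * k * I).re = 0 := by
  simp

lemma differentiableAt_besselPair (hb : 0 < b) (hz : z.re < 1) :
    DifferentiableAt ℂ (besselPair b k) z :=
  (differentiableAt_besselMellinExt hb (re_two_pi_mul_mul_I k).ge hz).add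
    (differentiableAt_besselMellinExt hb (by simp) hz)

lemma norm_besselPair_le (hb : 0 < b) (hk : k ≠ 0) (hz : z.re < 1) :
    ‖besselPair b k z‖ ≤
      2 * (besselMellinExtBound z * b ^ (z.re - 2) / (2 * π * k) ^ 2) := by
  have hw := two_pi_mul_mul_I_ne_zero hk
  have hnorm : ‖2 * π * k * I‖ ^ 2 = (2 * π * k) ^ 2 := by
    simp [abs_of_pos Real.pi_pos, mul_pow]
  have hpos := norm_besselMellinExt_le hb (re_two_pi_mul_mul_I k).ge hw hz
  have hneg := norm_besselMellinExt_le hb (w := -(2 * π * k * I)) (by simp) (neg_ne_zero.2 hw) hz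
  rw [norm_neg, hnorm] at hneg
  rw [hnorm] at hpos
  exact (norm_add_le _ _).trans (by linarith)

lemma besselMellinExt_sq_one_half (hb : 0 < b) {r : ℂ} (hr : 0 < r.re) (hr' : 0 ≤ (r ^ 2).re) :
    besselMellinExt b (r ^ 2) (1 / 2) = Real.sqrt π / r * cexp (-2 * r * Real.sqrt b) := by
  have hr₀ : r ≠ 0 := fun h => by simp [h] at hr
  have hsq : (π : ℂ) / r ^ 2 = (Real.sqrt π / r) ^ 2 := by
    rw [div_pow, ← ofReal_pow, Real.sq_sqrt Real.pi_pos.le]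
  have hre : 0 < (Real.sqrt π / r : ℂ).re := by
    rw [div_re, ofReal_re, ofReal_im, zero_mul, zero_div, add_zero]
    exact div_pos (mul_pos (Real.sqrt_pos.2 Real.pi_pos) hr) (normSq_pos.2 hr₀)
  rw [besselMellinExt_one_half hb hr' (pow_ne_zero 2 hr₀), hsq, sq_cpow_two_inv hre,
    sq_cpow_two_inv hr]

lemma one_sub_I_mul_cexp_add_one_add_I_mul_cexp (v : ℝ) :
    (1 - I) * cexp (-(v * (1 + I))) + (1 + I) * cexp (-(v * (1 - I))) =
      ((2 * Real.sqrt 2 * (Real.exp (-v) * Real.sin (π / 4 - v)) : ℝ) : ℂ) := by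
  have hsin : Real.sqrt 2 * Real.sin (π / 4 - v) = Real.cos v - Real.sin v := by
    rw [Real.sin_sub, Real.sin_pi_div_four, Real.cos_pi_div_four]
    linear_combination (Real.cos v - Real.sin v) / 2 * Real.mul_self_sqrt zero_le_two
  have hadd : cexp (-(v * (1 + I))) = cexp (-v) * (cos v - sin v * I) := by
    rw [show -(v * (1 + I)) = -v + (-v) * I by ring, Complex.exp_add, exp_mul_I, Complex.cos_neg,
      Complex.sin_neg, neg_mul, ← sub_eq_add_neg]
  have hsub : cexp (-(v * (1 - I))) = cexp (-v) * (cos v + sin v * I) := by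
    rw [show -(v * (1 - I)) = -v + v * I by ring, Complex.exp_add, exp_mul_I]
  rw [mul_left_comm, mul_assoc, mul_left_comm (Real.exp _), hsin, hadd, hsub]
  push_cast
  linear_combination 2 * cexp (-v) * sin v * I_sq

lemma besselPair_one_half (hb : 0 < b) (hk : 0 < k) :
    besselPair b k (1 / 2) =
      ((Real.sqrt 2 / Real.sqrt k * (Real.exp (-(2 * Real.sqrt (π * k * b))) *
        Real.sin (π / 4 - 2 * Real.sqrt (π * k * b))) : ℝ) : ℂ) := by
  set a := Real.sqrt (π * k) with ha
  have hpos : 0 < π * k := by positivity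
  have ha₀ : 0 < a := Real.sqrt_pos.2 hpos
  have hasq : (a : ℂ) ^ 2 = π * k := by
    rw [← ofReal_pow, ha, Real.sq_sqrt hpos.le, ofReal_mul]
  have hadd : 2 * π * k * I = (a * (1 + I)) ^ 2 := by
    linear_combination (-2 * I) * hasq - (a : ℂ) ^ 2 * I_sq
  have hsub : -(2 * π * k * I) = (a * (1 - I)) ^ 2 := by
    linear_combination 2 * I * hasq - (a : ℂ) ^ 2 * I_sq
  have hinv_add : (1 + I)⁻¹ = (1 - I) / 2 :=
    inv_eq_of_mul_eq_one_right (by linear_combination -I_sq / 2)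
  have hinv_sub : (1 - I)⁻¹ = (1 + I) / 2 :=
    inv_eq_of_mul_eq_one_right (by linear_combination -I_sq / 2)
  have hcoeff : Real.sqrt π / a = (Real.sqrt k)⁻¹ := by
    rw [ha, Real.sqrt_mul Real.pi_pos.le, div_mul_cancel_left₀ (Real.sqrt_pos.2 Real.pi_pos).ne']
  have htrig := one_sub_I_mul_cexp_add_one_add_I_mul_cexp (2 * a * Real.sqrt b)
  rw [Real.sqrt_mul hpos.le b, ← ha, ← mul_assoc 2 a]
  rw [besselPair, hsub, hadd, besselMellinExt_sq_one_half hb, besselMellinExt_sq_one_half hb]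
  · rw [← div_div, ← div_div, div_eq_mul_inv _ (1 + I), div_eq_mul_inv _ (1 - I), hinv_add,
      hinv_sub, ← ofReal_div, hcoeff,
      show -2 * (a * (1 + I)) * Real.sqrt b = -((2 * a * Real.sqrt b : ℝ) * (1 + I)) by
        push_cast; ring,
      show -2 * (a * (1 - I)) * Real.sqrt b = -((2 * a * Real.sqrt b : ℝ) * (1 - I)) by
        push_cast; ring]
    push_cast at htrig ⊢
    linear_combination (Real.sqrt k : ℂ)⁻¹ / 2 * htrig
  · simpa using ha₀
  · simp [← hsub]
  · simpa using ha₀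
  · simp [← hadd]

end Pair

/-! ### Poisson summation -/

/-- The summand `u ↦ u^{-s} e^{-b/u}`, extended by `0` to `u ≤ 0`, to which Poisson summation is
applied. -/
noncomputable def besselWeight (b : ℝ) (s : ℂ) : ℝ → ℂ :=
  (Set.Ioi 0).indicator fun u => (u : ℂ) ^ (-s) * besselKernel b 0 u

section Poisson

variable {b : ℝ} {s : ℂ}

lemma besselWeight_of_pos (b : ℝ) (s : ℂ) {u : ℝ} (hu : 0 < u) :
    besselWeight b s u = (u : ℂ) ^ (-s) * cexp (-(b / u)) := by
  rw [besselWeight, Set.indicator_of_mem (Set.mem_Ioi.2 hu), besselKernel, zero_mul, sub_zero]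

lemma besselWeight_of_nonpos (b : ℝ) (s : ℂ) {u : ℝ} (hu : u ≤ 0) : besselWeight b s u = 0 :=
  Set.indicator_of_notMem (Set.notMem_Ioi.2 hu) _

lemma continuous_besselWeight (hb : 0 < b) (hs : s ≠ 0) : Continuous (besselWeight b s) := by
  have hzero : ((0 : ℝ) : ℂ) ^ (-s) * besselKernel b 0 0 = 0 := by
    rw [ofReal_zero, zero_cpow (neg_ne_zero.2 hs), zero_mul]
  refine continuous_indicator (by simpa using hzero) ?_
  rw [closure_Ioi]
  intro u hu
  rcases (Set.mem_Ici.1 hu).eq_or_lt with rfl | hu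
  · rw [← continuousWithinAt_Ioi_iff_Ici, ContinuousWithinAt, hzero]
    exact tendsto_cpow_mul_besselKernel_nhdsGT_zero hb le_rfl _
  · refine ((continuousAt_ofReal_cpow_const _ _ (.inr hu.ne')).mul ?_).continuousWithinAt
    exact (continuousOn_besselKernel b 0).continuousAt (Ioi_mem_nhds hu)

lemma besselWeight_isBigO_cocompact (hb : 0 ≤ b) (s : ℂ) :
    besselWeight b s =O[cocompact ℝ] fun u => |u| ^ (-s.re) := by
  refine .of_bound 1 (.of_forall fun u => ?_)
  rw [one_mul, Real.norm_of_nonneg (by positivity)]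
  rcases le_or_gt u 0 with hu | hu
  · rw [besselWeight_of_nonpos b s hu, norm_zero]
    positivity
  · rw [besselWeight, Set.indicator_of_mem (Set.mem_Ioi.2 hu), norm_mul,
      norm_cpow_eq_rpow_re_of_pos hu, abs_of_pos hu]
    exact mul_le_of_le_one_right (by positivity) (norm_besselKernel_le_one hb le_rfl hu.le)

lemma fourier_besselWeight (b : ℝ) (s : ℂ) (v : ℝ) :
    FourierTransform.fourier (besselWeight b s) v = besselMellin b (2 * π * v * I) (1 - s) := by
  rw [Real.fourier_real_eq_integral_exp_smul, besselMellin, mellin,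
    ← integral_indicator measurableSet_Ioi]
  refine integral_congr_ae (.of_forall fun u => ?_)
  rcases le_or_gt u 0 with hu | hu
  · simp [besselWeight_of_nonpos b s hu, Set.notMem_Ioi.2 hu]
  · simp only [besselWeight_of_pos b s hu, Set.indicator_of_mem (Set.mem_Ioi.2 hu), besselKernel,
      smul_eq_mul, sub_sub_cancel_left, mul_left_comm, ← Complex.exp_add]
    push_cast
    ring_nf

lemma besselMellin_add_besselMellin_neg (hb : 0 < b) (hs : 1 < s.re) {k : ℝ} (hk : k ≠ 0) :
    besselMellin b (2 * π * k * I) (1 - s) + besselMellin b (2 * π * (-k : ℝ) * I) (1 - s) =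
      besselPair b k (1 - s) := by
  have hw := two_pi_mul_mul_I_ne_zero hk
  have hz : (1 - s).re < 0 := by simpa using hs
  rw [besselPair, besselMellinExt_eq_besselMellin hb (re_two_pi_mul_mul_I k).ge hw (.inl hz),
    besselMellinExt_eq_besselMellin hb (by simp) (neg_ne_zero.2 hw) (.inl hz)]
  push_cast
  ring_nf

lemma summable_fourier_besselWeight (hb : 0 < b) (hs : 1 < s.re) :
    Summable fun n : ℤ => FourierTransform.fourier (besselWeight b s) (n : ℝ) := by
  have hz : (1 - s).re < 0 := by simpa using hs
  refine Summable.of_norm_bounded_eventually ((Real.summable_one_div_int_pow.2 one_lt_two).mul_left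
    (besselMellinExtBound (1 - s) * b ^ ((1 - s).re - 2) / (2 * π) ^ 2)) ?_
  filter_upwards [(Set.finite_singleton (0 : ℤ)).compl_mem_cofinite] with n hn
  have hn₀ : (n : ℝ) ≠ 0 := Int.cast_ne_zero.2 hn
  have hw := two_pi_mul_mul_I_ne_zero hn₀
  have hle := norm_besselMellinExt_le hb (re_two_pi_mul_mul_I n).ge hw (hz.trans one_pos)
  rw [fourier_besselWeight, ← besselMellinExt_eq_besselMellin hb (re_two_pi_mul_mul_I n).ge hw
    (.inl hz)]
  refine hle.trans_eq ?_
  have hnorm : ‖2 * π * (n : ℝ) * I‖ ^ 2 = (2 * π) ^ 2 * (n : ℝ) ^ 2 := by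
    simp [abs_of_pos Real.pi_pos, mul_pow]
  rw [hnorm]
  field_simp

lemma injective_pnat_int_cast : Function.Injective (fun d : ℕ+ => (d : ℤ)) :=
  Nat.cast_injective.comp PNat.coe_injective

lemma tsum_int_besselWeight (b : ℝ) (s : ℂ) :
    ∑' n : ℤ, besselWeight b s n = ∑' d : ℕ+, (d : ℂ) ^ (-s) * cexp (-(b / d)) := by
  rw [← injective_pnat_int_cast.tsum_eq]
  · refine tsum_congr fun d => ?_
    rw [besselWeight_of_pos b s (by simp)]
    push_cast
    rfl
  · refine Function.support_subset_iff'.2 fun n hn => besselWeight_of_nonpos b s ?_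
    by_contra! hpos
    exact hn ⟨⟨n.toNat, by simpa using hpos⟩, by simpa using (Int.cast_pos.1 hpos).le⟩

theorem tsum_cpow_neg_mul_cexp_neg_div (hb : 0 < b) (hs : 1 < s.re) :
    ∑' d : ℕ+, (d : ℂ) ^ (-s) * cexp (-(b / d)) =
      (b : ℂ) ^ (1 - s) * Gamma (s - 1) + ∑' k : ℕ+, besselPair b k (1 - s) := by
  have hs₀ : s ≠ 0 := fun h => by norm_num [h] at hs
  have hsum := summable_fourier_besselWeight hb hs
  have hpoisson := Real.tsum_eq_tsum_fourier_of_rpow_decay_of_summable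
    (continuous_besselWeight hb hs₀) hs (besselWeight_isBigO_cocompact hb.le s) hsum 0
  simp only [zero_add, QuotientAddGroup.mk_zero, fourier_eval_zero, mul_one] at hpoisson
  have hpos : Summable fun k : ℕ+ =>
      FourierTransform.fourier (besselWeight b s) ((k : ℤ) : ℝ) :=
    hsum.comp_injective injective_pnat_int_cast
  have hneg : Summable fun k : ℕ+ =>
      FourierTransform.fourier (besselWeight b s) ((-(k : ℤ) : ℤ) : ℝ) :=
    hsum.comp_injective (neg_injective.comp injective_pnat_int_cast)
  rw [← tsum_int_besselWeight, hpoisson, tsum_int_eq_zero_add_tsum_pnat hsum, add_assoc,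
    ← hpos.tsum_add hneg]
  congr 1
  · rw [fourier_besselWeight, Int.cast_zero, ofReal_zero, mul_zero, zero_mul,
      besselMellin_zero hb (by simpa using hs), neg_sub]
  · refine tsum_congr fun k => ?_
    rw [← besselMellin_add_besselMellin_neg hb hs (by simp), fourier_besselWeight,
      fourier_besselWeight]
    push_cast
    rfl

end Poisson

/-! ### The identity for large `Re s` -/

section Coth

variable {z : ℂ}

lemma norm_cexp_neg_two_pi_mul_lt_one (hz : 0 < z.re) : ‖cexp (-(2 * π * z))‖ < 1 := by
  rw [norm_exp, Real.exp_lt_one_iff]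
  simpa [mul_assoc] using mul_pos Real.pi_pos hz

lemma tsum_cexp_neg_pow_eq_one_add_tsum_pnat (hz : 0 < z.re) :
    ∑' n : ℕ, cexp (-(2 * π * z)) ^ n = 1 + ∑' m : ℕ+, cexp (-(2 * π * z * m)) := by
  rw [← tsum_zero_pnat_eq_tsum_nat (f := (cexp (-(2 * π * z)) ^ ·))
    (summable_geometric_of_norm_lt_one (norm_cexp_neg_two_pi_mul_lt_one hz)), pow_zero]
  congr 1
  refine tsum_congr fun m => ?_
  rw [← Complex.exp_nat_mul]
  ring_nf

lemma one_div_I_mul_sub_add_one_div_I_mul_add (hz : 0 < z.re) (a : ℝ) :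
    1 / (I * z - a) + 1 / (I * z + a) = -(2 * I * z) * (1 / (z ^ 2 + a ^ 2)) := by
  have hsub : I * z - a ≠ 0 := fun h => by simpa [hz.ne'] using congrArg im h
  have hadd : I * z + a ≠ 0 := fun h => by simpa [hz.ne'] using congrArg im h
  have hprod : z ^ 2 + a ^ 2 = -((I * z - a) * (I * z + a)) := by
    linear_combination z ^ 2 * I_sq
  rw [hprod]
  field_simp
  ring

lemma tsum_pnat_cexp_neg_two_pi_mul (hz : 0 < z.re) :
    ∑' m : ℕ+, cexp (-(2 * π * z * m)) =
      1 / (2 * π * z) - 1 / 2 + z / π * ∑' m : ℕ+, 1 / (z ^ 2 + (m : ℂ) ^ 2) := by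
  have hz₀ : z ≠ 0 := fun h => by simp [h] at hz
  let τ : UpperHalfPlane := ⟨I * z, by simpa using hz⟩
  have hq := pi_mul_cot_pi_q_exp τ
  rw [cot_series_rep (UpperHalfPlane.coe_mem_integerComplement τ),
    show 2 * π * I * (τ : ℂ) = -(2 * π * z) by linear_combination (2 * π * z) * I_sq,
    tsum_cexp_neg_pow_eq_one_add_tsum_pnat hz] at hq
  have hfrac : ∑' m : ℕ+, (1 / ((τ : ℂ) - m) + 1 / (τ + m)) =
      -(2 * I * z) * ∑' m : ℕ+, 1 / (z ^ 2 + (m : ℂ) ^ 2) := by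
    rw [← tsum_mul_left]
    exact tsum_congr fun m => mod_cast one_div_I_mul_sub_add_one_div_I_mul_add hz m
  have hinv : 1 / (τ : ℂ) = -I / z := by
    change 1 / (I * z) = -I / z
    rw [div_mul_eq_div_div, one_div, inv_I]
  rw [hfrac, hinv] at hq
  field_simp at hq ⊢
  linear_combination hq

end Coth

lemma summable_pnat_rpow {a : ℝ} (ha : a < -1) : Summable fun n : ℕ+ => (n : ℝ) ^ a :=
  (Real.summable_nat_rpow.2 ha).comp_injective PNat.coe_injective

lemma hasSum_pnat_cpow_neg {s : ℂ} (hs : 1 < s.re) :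
    HasSum (fun n : ℕ+ => (n : ℂ) ^ (-s)) (riemannZeta s) := by
  have hsum : Summable fun n : ℕ => (n : ℂ) ^ (-s) := by
    simpa only [one_div, ← cpow_neg] using summable_one_div_nat_cpow.2 hs
  rw [zeta_eq_tsum_one_div_nat_add_one_cpow hs]
  have hhas := (hsum.comp_injective PNat.coe_injective).hasSum
  simp only [Function.comp_def] at hhas
  rw [tsum_pnat_eq_tsum_succ (f := fun n : ℕ => (n : ℂ) ^ (-s))] at hhas
  simpa only [one_div, ← cpow_neg, Nat.cast_add, Nat.cast_one] using hhas

lemma summable_pnat_prod_rpow {σ : ℝ} (hσ : 0 < σ) :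
    Summable fun p : ℕ+ × ℕ+ => (p.1 : ℝ) ^ (-1 - σ) * (p.2 : ℝ) ^ (-2 : ℝ) :=
  (summable_pnat_rpow (by linarith)).mul_of_nonneg (summable_pnat_rpow (by norm_num))
    (fun _ => by positivity) (fun _ => by positivity)

/-- `∑_{m,k} besselPair (2πxm) k (1 - s)`, over positive integers `m` and `k`. -/
noncomputable def besselSum (x : ℝ) (s : ℂ) : ℂ :=
  ∑' p : ℕ+ × ℕ+, besselPair (2 * π * x * p.1) p.2 (1 - s)

/-- `∑_{d,m} d^{1-s} / (x² + (dm)²)`, which is `∑_n σ_{1-s}(n) / (x² + n²)`. -/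
noncomputable def lorentzSum (x : ℝ) (s : ℂ) : ℂ :=
  ∑' p : ℕ+ × ℕ+, (p.1 : ℂ) ^ (1 - s) / (x ^ 2 + (p.1 * p.2) ^ 2)

section DoubleSum

variable {x : ℝ} {s : ℂ}

lemma norm_besselPair_two_pi_mul_le (hx : 0 < x) (hs : 0 < s.re) (p : ℕ+ × ℕ+) :
    ‖besselPair (2 * π * x * p.1) p.2 (1 - s)‖ ≤
      2 * (besselMellinExtBound (1 - s) * (2 * π * x) ^ (-1 - s.re) / (2 * π) ^ 2) *
        ((p.1 : ℝ) ^ (-1 - s.re) * (p.2 : ℝ) ^ (-2 : ℝ)) := by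
  have hpos : 0 < 2 * π * x := by positivity
  have hp : (0 : ℝ) < p.1 := by simp
  refine (norm_besselPair_le (mul_pos hpos hp) (by simp) (by simpa using hs)).trans_eq ?_
  rw [show (1 - s).re - 2 = -1 - s.re by simp; ring, Real.mul_rpow hpos.le hp.le,
    Real.rpow_neg (by simp), Real.rpow_two]
  field_simp

lemma norm_cpow_div_sq_add_sq_le (x : ℝ) (s : ℂ) (p : ℕ+ × ℕ+) :
    ‖(p.1 : ℂ) ^ (1 - s) / (x ^ 2 + (p.1 * p.2) ^ 2)‖ ≤
      1 * ((p.1 : ℝ) ^ (-1 - s.re) * (p.2 : ℝ) ^ (-2 : ℝ)) := by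
  have hp : (0 : ℝ) < p.1 := by simp
  have hp' : (0 : ℝ) < p.2 := by simp
  have hden : (x ^ 2 + (p.1 * p.2) ^ 2 : ℂ) = ((x ^ 2 + (p.1 * p.2) ^ 2 : ℝ) : ℂ) := by
    push_cast; rfl
  rw [norm_div, hden, norm_real, Real.norm_of_nonneg (by positivity), ← ofReal_natCast,
    norm_cpow_eq_rpow_re_of_pos hp, one_mul]
  calc (p.1 : ℝ) ^ (1 - s).re / (x ^ 2 + (p.1 * p.2) ^ 2)
    _ ≤ (p.1 : ℝ) ^ (1 - s).re / (p.1 * p.2) ^ 2 := by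
        gcongr
        exact le_add_of_nonneg_left (sq_nonneg x)
    _ = (p.1 : ℝ) ^ (-1 - s.re) * (p.2 : ℝ) ^ (-2 : ℝ) := by
        rw [show -1 - s.re = (1 - s).re - 2 by simp; ring, Real.rpow_sub hp, Real.rpow_neg hp'.le,
          Real.rpow_two, Real.rpow_two, mul_pow, ← div_eq_mul_inv, div_div]

lemma summable_besselPair (hx : 0 < x) (hs : 0 < s.re) :
    Summable fun p : ℕ+ × ℕ+ => besselPair (2 * π * x * p.1) p.2 (1 - s) :=
  .of_norm_bounded ((summable_pnat_prod_rpow hs).mul_left _)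
    (norm_besselPair_two_pi_mul_le hx hs)

lemma summable_cpow_div_sq_add_sq (x : ℝ) (hs : 0 < s.re) :
    Summable fun p : ℕ+ × ℕ+ => (p.1 : ℂ) ^ (1 - s) / (x ^ 2 + (p.1 * p.2) ^ 2) :=
  .of_norm_bounded ((summable_pnat_prod_rpow hs).mul_left 1) (norm_cpow_div_sq_add_sq_le x s)

lemma tsum_tsum_eq_zeta_add_besselSum (hx : 0 < x) (hs : 2 < s.re) :
    ∑' (m : ℕ+) (d : ℕ+), (d : ℂ) ^ (-s) * cexp (-((2 * π * x * m : ℝ) / d)) =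
      (2 * π * x) ^ (1 - s) * Gamma (s - 1) * riemannZeta (s - 1) + besselSum x s := by
  have hsum := summable_besselPair hx (two_pos.trans hs)
  have hzeta : HasSum (fun m : ℕ+ => ((2 * π * x * m : ℝ) : ℂ) ^ (1 - s) * Gamma (s - 1))
      ((2 * π * x) ^ (1 - s) * Gamma (s - 1) * riemannZeta (s - 1)) := by
    refine ((hasSum_pnat_cpow_neg (s := s - 1) (by simp; linarith)).mul_left
      ((2 * π * x) ^ (1 - s) * Gamma (s - 1))).congr_fun fun m => ?_
    rw [ofReal_mul, mul_cpow_ofReal_nonneg (by positivity) (by positivity)]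
    push_cast
    rw [neg_sub]
    ring
  rw [besselSum, hsum.tsum_prod, ← hzeta.tsum_eq, ← hzeta.summable.tsum_add hsum.prod]
  exact tsum_congr fun m => tsum_cpow_neg_mul_cexp_neg_div (by positivity) (by linarith)

lemma tsum_cpow_neg_mul_cexp_neg (hx : 0 < x) (s : ℂ) (d : ℕ+) :
    ∑' m : ℕ+, (d : ℂ) ^ (-s) * cexp (-((2 * π * x * m : ℝ) / d)) =
      (d : ℂ) ^ (-(s - 1)) / (2 * π * x) - (d : ℂ) ^ (-s) / 2 +
        x / π * ∑' m : ℕ+, (d : ℂ) ^ (1 - s) / (x ^ 2 + (d * m) ^ 2) := by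
  have hd : (d : ℂ) ≠ 0 := by simp
  have hx' : (x : ℂ) ≠ 0 := ofReal_ne_zero.2 hx.ne'
  have hz : 0 < (x / d : ℂ).re := by
    rw [← ofReal_natCast, ← ofReal_div, ofReal_re]
    exact div_pos hx (by simp)
  have hpow : (d : ℂ) ^ (1 - s) = d * (d : ℂ) ^ (-s) := by
    rw [sub_eq_add_neg, cpow_add _ _ hd, cpow_one]
  have hexp (m : ℕ+) : cexp (-((2 * π * x * m : ℝ) / d)) = cexp (-(2 * π * (x / d) * m)) := by
    push_cast
    ring_nf
  have hfrac (m : ℕ+) : (d : ℂ) ^ (1 - s) / (x ^ 2 + (d * m) ^ 2) =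
      (d : ℂ) ^ (-s) / d * (1 / ((x / d) ^ 2 + (m : ℂ) ^ 2)) := by
    rw [hpow, show ((x / d) ^ 2 + m ^ 2 : ℂ) = (x ^ 2 + (d * m) ^ 2) / d ^ 2 by field_simp]
    field_simp
  simp only [hexp, hfrac, tsum_mul_left, tsum_pnat_cexp_neg_two_pi_mul hz, neg_sub]
  rw [hpow]
  field_simp

lemma tsum_tsum_eq_zeta_add_lorentzSum (hx : 0 < x) (hs : 2 < s.re) :
    ∑' (d : ℕ+) (m : ℕ+), (d : ℂ) ^ (-s) * cexp (-((2 * π * x * m : ℝ) / d)) =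
      riemannZeta (s - 1) / (2 * π * x) - riemannZeta s / 2 + x / π * lorentzSum x s := by
  have hsum := summable_cpow_div_sq_add_sq x (two_pos.trans hs)
  have hzeta := hasSum_pnat_cpow_neg (s := s - 1) (by simp; linarith)
  have hzeta' := hasSum_pnat_cpow_neg (s := s) (by linarith)
  simp only [tsum_cpow_neg_mul_cexp_neg hx]
  rw [lorentzSum, hsum.tsum_prod]
  exact (((hzeta.div_const _).sub (hzeta'.div_const 2)).add (hsum.prod.hasSum.mul_left _)).tsum_eq

lemma exp_neg_le_two_div_sq {y : ℝ} (hy : 0 < y) : Real.exp (-y) ≤ 2 / y ^ 2 := by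
  rw [Real.exp_neg, ← inv_div]
  exact inv_anti₀ (by positivity) (by linarith [Real.quadratic_le_exp_of_nonneg hy.le])

lemma summable_cpow_neg_mul_cexp_neg (hx : 0 < x) (hs : 3 < s.re) :
    Summable fun p : ℕ+ × ℕ+ => (p.1 : ℂ) ^ (-s) * cexp (-((2 * π * x * p.2 : ℝ) / p.1)) := by
  refine .of_norm_bounded ((summable_pnat_prod_rpow (sub_pos.2 hs)).mul_left (2 / (2 * π * x) ^ 2))
    fun p => ?_
  have hp : (0 : ℝ) < p.1 := by simp
  have hp' : (0 : ℝ) < p.2 := by simp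
  rw [norm_mul, ← ofReal_natCast, norm_cpow_eq_rpow_re_of_pos hp, ← ofReal_div, ← ofReal_neg,
    norm_exp_ofReal]
  calc (p.1 : ℝ) ^ (-s).re * Real.exp (-(2 * π * x * p.2 / p.1))
    _ ≤ (p.1 : ℝ) ^ (-s).re * (2 / (2 * π * x * p.2 / p.1) ^ 2) := by
        gcongr
        exact exp_neg_le_two_div_sq (by positivity)
    _ = 2 / (2 * π * x) ^ 2 * ((p.1 : ℝ) ^ (-1 - (s.re - 3)) * (p.2 : ℝ) ^ (-2 : ℝ)) := by
        rw [show -1 - (s.re - 3) = (-s).re + 2 by simp; ring, Real.rpow_add hp,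
          Real.rpow_neg hp'.le, Real.rpow_two, Real.rpow_two]
        field_simp

theorem besselSum_eq_of_three_lt_re (hx : 0 < x) (hs : 3 < s.re) :
    (2 * π * x) ^ (1 - s) * Gamma (s - 1) * riemannZeta (s - 1) + besselSum x s =
      riemannZeta (s - 1) / (2 * π * x) - riemannZeta s / 2 + x / π * lorentzSum x s := by
  rw [← tsum_tsum_eq_zeta_add_besselSum hx (by linarith),
    ← tsum_tsum_eq_zeta_add_lorentzSum hx (by linarith)]
  exact (summable_cpow_neg_mul_cexp_neg hx hs).tsum_comm

end DoubleSum

/-! ### Continuation to `Re s > 0` -/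

lemma differentiableAt_tsum_of_norm_le_rpow {F : ℕ+ × ℕ+ → ℂ → ℂ} {K : ℂ → ℝ} {s₀ : ℂ}
    (hs₀ : 0 < s₀.re) (hK : ContinuousAt K s₀)
    (hF : ∀ p s, 0 < s.re → DifferentiableAt ℂ (F p) s)
    (hle : ∀ p s, 0 < s.re →
      ‖F p s‖ ≤ K s * ((p.1 : ℝ) ^ (-1 - s.re) * (p.2 : ℝ) ^ (-2 : ℝ))) :
    DifferentiableAt ℂ (fun s => ∑' p, F p s) s₀ := by
  have hnhds : ∀ᶠ s in 𝓝 s₀, s₀.re / 2 < s.re ∧ K s < |K s₀| + 1 :=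
    (continuous_re.continuousAt.eventually_const_lt (half_lt_self hs₀)).and
      (hK.eventually_lt_const ((le_abs_self _).trans_lt (lt_add_one _)))
  obtain ⟨U, hU, hUo, hmem⟩ := eventually_nhds_iff.1 hnhds
  have hre {s : ℂ} (hs : s ∈ U) : 0 < s.re := (half_pos hs₀).trans (hU s hs).1
  refine (differentiableOn_tsum_of_summable_norm
    ((summable_pnat_prod_rpow (half_pos hs₀)).mul_left (|K s₀| + 1))
    (fun p s hs => (hF p s (hre hs)).differentiableWithinAt) hUo
    fun p s hs => (hle p s (hre hs)).trans ?_).differentiableAt (hUo.mem_nhds hmem)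
  have hp : (1 : ℝ) ≤ p.1 := by exact_mod_cast (one_le : 1 ≤ p.1)
  obtain ⟨hs_re, hs_K⟩ := hU s hs
  gcongr

section Holomorphy

variable {x : ℝ} {s : ℂ}

lemma continuousAt_besselMellinExtBound {z : ℂ} (hz : z.re < 1) :
    ContinuousAt besselMellinExtBound z := by
  have hGamma {a : ℝ} (ha : 2 ≤ a) : ContinuousAt (fun z : ℂ => Real.Gamma (a - z.re)) z :=
    (Real.differentiableOn_Gamma_Ioi.differentiableAt
      (Ioi_mem_nhds (show 0 < a - z.re by linarith))).continuousAt.comp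
      (f := fun z : ℂ => a - z.re) (by fun_prop)
  unfold besselMellinExtBound
  have h2 := hGamma le_rfl
  have h3 := hGamma (a := 3) (by norm_num)
  have h4 := hGamma (a := 4) (by norm_num)
  fun_prop

lemma differentiableAt_besselSum (hx : 0 < x) (hs : 0 < s.re) :
    DifferentiableAt ℂ (besselSum x) s := by
  have hpos : 0 < 2 * π * x := by positivity
  refine differentiableAt_tsum_of_norm_le_rpow (K := fun s =>
    2 * (besselMellinExtBound (1 - s) * (2 * π * x) ^ (-1 - s.re) / (2 * π) ^ 2)) hs ?_
    (fun p s hs => ?_) fun p s hs => norm_besselPair_two_pi_mul_le hx hs p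
  · have hbound : ContinuousAt (fun s => besselMellinExtBound (1 - s)) s :=
      (continuousAt_besselMellinExtBound (z := 1 - s) (by simpa using hs)).comp
        (f := fun s => 1 - s) (by fun_prop)
    have hrpow : Continuous fun s : ℂ => (2 * π * x) ^ (-1 - s.re) :=
      (Real.continuous_const_rpow hpos.ne').comp (by fun_prop)
    exact ((hbound.mul hrpow.continuousAt).div_const _).const_mul 2
  · exact (differentiableAt_besselPair (z := 1 - s) (by positivity) (by simpa using hs)).comp s
      (by fun_prop)

lemma differentiableAt_lorentzSum (x : ℝ) (hs : 0 < s.re) :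
    DifferentiableAt ℂ (lorentzSum x) s := by
  refine differentiableAt_tsum_of_norm_le_rpow (K := fun _ => 1) hs continuousAt_const
    (fun p s _ => ?_) fun p s _ => norm_cpow_div_sq_add_sq_le x s p
  have hp : (p.1 : ℂ) ≠ 0 := by simp
  exact ((differentiableAt_id.const_sub 1).const_cpow (.inl hp)).div_const _

lemma sub_one_mul_riemannZeta (hs : s ≠ 1) : (s - 1) * riemannZeta s = riemannZeta₁ s := by
  rw [riemannZeta_eq_inv_sub_mul hs, mul_inv_cancel_left₀ (sub_ne_zero.2 hs)]

/-- Multiplying by `(s - 1) (s - 2)` removes the poles of `Γ (s - 1)`, `ζ (s - 1)` and `ζ s`. -/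
lemma besselSum_eq_iff_mul (x : ℝ) (hs1 : s ≠ 1) (hs2 : s ≠ 2) :
    (2 * π * x) ^ (1 - s) * Gamma (s - 1) * riemannZeta (s - 1) + besselSum x s =
        riemannZeta (s - 1) / (2 * π * x) - riemannZeta s / 2 + x / π * lorentzSum x s ↔
      (2 * π * x) ^ (1 - s) * Gamma s * riemannZeta₁ (s - 1) +
          (s - 1) * (s - 2) * besselSum x s =
        (s - 1) * riemannZeta₁ (s - 1) / (2 * π * x) - (s - 2) * riemannZeta₁ s / 2 +
          (s - 1) * (s - 2) * (x / π * lorentzSum x s) := by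
  have hne : (s - 1) * (s - 2) ≠ 0 := mul_ne_zero (sub_ne_zero.2 hs1) (sub_ne_zero.2 hs2)
  have hGamma : Gamma s = (s - 1) * Gamma (s - 1) := by
    rw [← Gamma_add_one _ (sub_ne_zero.2 hs1), sub_add_cancel]
  have hs2' : s - 1 ≠ 1 := fun h => hs2 (by linear_combination h)
  rw [← mul_right_inj' hne, hGamma, ← sub_one_mul_riemannZeta hs1,
    ← sub_one_mul_riemannZeta hs2']
  ring_nf

theorem besselSum_eq (hx : 0 < x) (hs : 0 < s.re) (hs1 : s ≠ 1) (hs2 : s ≠ 2) :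
    (2 * π * x) ^ (1 - s) * Gamma (s - 1) * riemannZeta (s - 1) + besselSum x s =
      riemannZeta (s - 1) / (2 * π * x) - riemannZeta s / 2 + x / π * lorentzSum x s := by
  rw [besselSum_eq_iff_mul x hs1 hs2]
  have hopen : IsOpen {s : ℂ | 0 < s.re} := isOpen_lt continuous_const continuous_re
  have hx' : (2 * π * x : ℂ) ≠ 0 := by exact_mod_cast (by positivity : 2 * π * x ≠ 0)
  have hzeta (s : ℂ) : DifferentiableAt ℂ (fun s => riemannZeta₁ (s - 1)) s :=
    (differentiable_riemannZeta₁ _).comp s (by fun_prop)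
  refine AnalyticOnNhd.eqOn_of_preconnected_of_eventuallyEq (z₀ := 4)
    (f := fun s => (2 * π * x) ^ (1 - s) * Gamma s * riemannZeta₁ (s - 1) +
      (s - 1) * (s - 2) * besselSum x s)
    (g := fun s => (s - 1) * riemannZeta₁ (s - 1) / (2 * π * x) - (s - 2) * riemannZeta₁ s / 2 +
      (s - 1) * (s - 2) * (x / π * lorentzSum x s))
    (DifferentiableOn.analyticOnNhd (fun s hs => ?_) hopen)
    (DifferentiableOn.analyticOnNhd (fun s hs => ?_) hopen)
    (convex_halfSpace_re_gt 0).isPreconnected (by simp) ?_ hs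
  · have hGamma := differentiableAt_Gamma s fun m hm => by simp [hm] at hs; linarith
    have hpow : DifferentiableAt ℂ (fun s : ℂ => (2 * π * x : ℂ) ^ (1 - s)) s :=
      (differentiableAt_id.const_sub 1).const_cpow (.inl hx')
    have hsum := differentiableAt_besselSum hx hs
    exact DifferentiableAt.differentiableWithinAt (by fun_prop)
  · have hzeta' := differentiable_riemannZeta₁ s
    have hsum := differentiableAt_lorentzSum x hs
    exact DifferentiableAt.differentiableWithinAt (by fun_prop)
  · have hnhds : ∀ᶠ s : ℂ in 𝓝 4, 3 < s.re :=
      continuous_re.continuousAt.eventually_const_lt (by norm_num)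
    filter_upwards [hnhds] with s hs
    refine (besselSum_eq_iff_mul x ?_ ?_).1 (besselSum_eq_of_three_lt_re hx hs) <;>
    · rintro rfl
      norm_num at hs

end Holomorphy

/-! ### Specialisation to `s = 1/2` -/

lemma sum_divisorsAntidiagonal_rpow_smul {E : Type*} [AddCommGroup E] [Module ℝ E] (r : ℝ)
    (f : ℕ → E) (n : ℕ) :
    ∑ q ∈ n.divisorsAntidiagonal, (q.1 : ℝ) ^ r • f (q.1 * q.2) = rsigma r n • f n := by
  rw [Nat.sum_divisorsAntidiagonal fun d e => (d : ℝ) ^ r • f (d * e), rsigma, Finset.sum_smul]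
  exact Finset.sum_congr rfl fun d hd => by rw [Nat.mul_div_cancel' (Nat.dvd_of_mem_divisors hd)]

lemma tsum_rpow_smul_mul_eq_tsum_rsigma_smul {E : Type*} [NormedAddCommGroup E] [NormedSpace ℝ E]
    [CompleteSpace E] {r : ℝ} {f : ℕ → E}
    (hf : Summable fun p : ℕ+ × ℕ+ => (p.1 : ℝ) ^ r • f (p.1 * p.2)) :
    ∑' p : ℕ+ × ℕ+, (p.1 : ℝ) ^ r • f (p.1 * p.2) = ∑' n : ℕ, rsigma r (n + 1) • f (n + 1) :=
  calc ∑' p : ℕ+ × ℕ+, (p.1 : ℝ) ^ r • f (p.1 * p.2)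
    _ = ∑' n : ℕ+, ∑' q : (n : ℕ).divisorsAntidiagonal,
          (q.1.1 : ℝ) ^ r • f (q.1.1 * q.1.2) := by
        rw [← sigmaAntidiagonalEquivProd.tsum_eq]
        exact (sigmaAntidiagonalEquivProd.summable_iff.2 hf).tsum_sigma
    _ = ∑' n : ℕ+, rsigma r n • f n := tsum_congr fun n => by
        rw [← sum_divisorsAntidiagonal_rpow_smul]
        exact Finset.tsum_subtype _ fun q : ℕ × ℕ => (q.1 : ℝ) ^ r • f (q.1 * q.2)
    _ = ∑' n : ℕ, rsigma r (n + 1) • f (n + 1) :=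
        tsum_pnat_eq_tsum_succ (f := fun n => rsigma r n • f n)

lemma lorentzSum_eq_tsum_rsigma (x : ℝ) {s : ℝ} (hs : 0 < s) :
    lorentzSum x s = ∑' n : ℕ,
      ((rsigma (1 - s) (n + 1) / (x ^ 2 + ((n : ℝ) + 1) ^ 2) : ℝ) : ℂ) := by
  let f : ℕ → ℂ := fun n => 1 / (x ^ 2 + n ^ 2)
  have hterm (p : ℕ+ × ℕ+) : (p.1 : ℂ) ^ (1 - s : ℂ) / (x ^ 2 + (p.1 * p.2) ^ 2) =
      (p.1 : ℝ) ^ (1 - s) • f (p.1 * p.2) := by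
    simp only [f, real_smul, ofReal_cpow (Nat.cast_nonneg (p.1 : ℕ))]
    push_cast
    ring
  have hsum := summable_cpow_div_sq_add_sq x (s := s) (by simpa using hs)
  simp only [hterm] at hsum
  simp only [lorentzSum, hterm, tsum_rpow_smul_mul_eq_tsum_rsigma_smul hsum]
  refine tsum_congr fun n => ?_
  simp only [f, real_smul]
  push_cast
  ring

lemma besselPair_two_pi_mul_one_half {x : ℝ} (hx : 0 < x) (m k : ℕ+) :
    besselPair (2 * π * x * m) k (1 / 2) =
      (m : ℝ) ^ (1 / 2 : ℝ) • ((Real.sqrt 2 / Real.sqrt (m * k) *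
        (Real.exp (-(2 * π * Real.sqrt (2 * (m * k) * x))) *
          Real.sin (π / 4 - 2 * π * Real.sqrt (2 * (m * k) * x))) : ℝ) : ℂ) := by
  have hk : (0 : ℝ) < k := by simp
  have hm : (0 : ℝ) < m := by simp
  have hsqrt : 2 * Real.sqrt (π * k * (2 * π * x * m)) =
      2 * π * Real.sqrt (2 * (m * k) * x) := by
    rw [show π * k * (2 * π * x * m) = π ^ 2 * (2 * (m * k) * x) by ring,
      Real.sqrt_mul (by positivity), Real.sqrt_sq Real.pi_pos.le]
    ring
  rw [besselPair_one_half (by positivity) hk, hsqrt, real_smul, ← ofReal_mul,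
    ← Real.sqrt_eq_rpow, Real.sqrt_mul hm.le]
  congr 1
  field_simp

lemma besselSum_one_half {x : ℝ} (hx : 0 < x) :
    besselSum x (1 / 2) = Real.sqrt 2 * ∑' n : ℕ,
      ((rsigma (1 / 2) (n + 1) / Real.sqrt ((n : ℝ) + 1) *
        Real.exp (-(2 * π * Real.sqrt (2 * ((n : ℝ) + 1) * x))) *
        Real.sin (π / 4 - 2 * π * Real.sqrt (2 * ((n : ℝ) + 1) * x)) : ℝ) : ℂ) := by
  let f : ℕ → ℂ := fun n => ((Real.sqrt 2 / Real.sqrt n *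
    (Real.exp (-(2 * π * Real.sqrt (2 * n * x))) *
      Real.sin (π / 4 - 2 * π * Real.sqrt (2 * n * x))) : ℝ) : ℂ)
  have hterm (p : ℕ+ × ℕ+) : besselPair (2 * π * x * p.1) p.2 (1 - 1 / 2) =
      (p.1 : ℝ) ^ (1 / 2 : ℝ) • f (p.1 * p.2) := by
    simp only [f, Nat.cast_mul]
    rw [← besselPair_two_pi_mul_one_half hx, sub_half]
  have hsum := summable_besselPair (s := 1 / 2) hx (by norm_num)
  simp only [hterm] at hsum
  simp only [besselSum, hterm, tsum_rpow_smul_mul_eq_tsum_rsigma_smul hsum, ← tsum_mul_left]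
  refine tsum_congr fun n => ?_
  simp only [f, real_smul]
  push_cast
  ring

lemma Gamma_neg_one_half : Gamma (-1 / 2) = (-2 * Real.sqrt π : ℝ) := by
  have hrec := Real.Gamma_add_one (s := -1 / 2) (by norm_num)
  rw [show (-1 / 2 + 1 : ℝ) = 1 / 2 by norm_num, Real.Gamma_one_half_eq] at hrec
  rw [show (-1 / 2 : ℂ) = (-1 / 2 : ℝ) by norm_num, Gamma_ofReal]
  exact congrArg ofReal (by linarith)

lemma two_pi_mul_cpow_one_half_mul_Gamma {x : ℝ} (hx : 0 < x) :
    (2 * π * x : ℂ) ^ (1 / 2 : ℂ) * Gamma (-1 / 2) =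
      -(Real.sqrt 2 * (2 * π * Real.sqrt x) : ℝ) := by
  have hpow : (2 * π * x : ℂ) ^ (1 / 2 : ℂ) = (Real.sqrt (2 * π * x) : ℝ) := by
    rw [Real.sqrt_eq_rpow, ofReal_cpow (by positivity)]
    push_cast
    rfl
  rw [hpow, Gamma_neg_one_half, ← ofReal_mul, ← ofReal_neg, Real.sqrt_mul (by positivity),
    Real.sqrt_mul two_pos.le]
  congr 1
  linear_combination (-2 * Real.sqrt 2 * Real.sqrt x) * Real.mul_self_sqrt Real.pi_pos.le

theorem corollary_half_minus (x : ℝ) (hx : 0 < x) :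
    (∑' n : ℕ, ((rsigma (1 / 2) (n + 1) / Real.sqrt ((n : ℝ) + 1) *
        Real.exp (-(2 * π * Real.sqrt (2 * ((n : ℝ) + 1) * x))) *
        Real.sin (π / 4 - 2 * π * Real.sqrt (2 * ((n : ℝ) + 1) * x)) : ℝ) : ℂ))
    = ((2 * π * Real.sqrt x + 1 / (2 * Real.sqrt 2 * π * x) : ℝ) : ℂ) * riemannZeta (-1 / 2)
      - riemannZeta (1 / 2) / ((2 * Real.sqrt 2 : ℝ) : ℂ)
      + ((x / (π * Real.sqrt 2) : ℝ) : ℂ) *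
        ∑' n : ℕ, ((rsigma (1 / 2) (n + 1) / (x ^ 2 + ((n : ℝ) + 1) ^ 2) : ℝ) : ℂ) := by
  have hpi : (π : ℂ) ≠ 0 := by simp
  have hsqrt : (Real.sqrt 2 : ℂ) ≠ 0 := by simp
  have hx' : (x : ℂ) ≠ 0 := ofReal_ne_zero.2 hx.ne'
  have hbessel := besselSum_one_half hx
  rw [mul_comm, ← div_eq_iff hsqrt] at hbessel
  have hlorentz := lorentzSum_eq_tsum_rsigma x (s := 1 / 2) (by norm_num)
  rw [sub_half, show ((1 / 2 : ℝ) : ℂ) = 1 / 2 by norm_num] at hlorentz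
  have hkey := besselSum_eq (s := 1 / 2) hx (by norm_num) (by norm_num) (by norm_num)
  rw [sub_half, show (1 / 2 - 1 : ℂ) = -1 / 2 by norm_num,
    two_pi_mul_cpow_one_half_mul_Gamma hx] at hkey
  rw [← hbessel, ← hlorentz]
  push_cast at hkey ⊢
  field_simp at hkey ⊢
  linear_combination hkey
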